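/- There exists a code C ⊆ {0,1}^8 with |C| = 36 and d_Z(a,b) ≥ 2 for all distinct a, b ∈ C having exactly 76 free points (with weight distribution z_0 = 1, z_1 = 0, z_2 = 4, z_3 = 8, z_4 = 10, z_5 = 8, z_6 = 4, z_7 = 0, z_8 = 1), and every code C ⊆ {0,1}^8 with |C| = 36 and d_Z(a,b) ≥ 2 for all distinct a, b ∈ C has at most 76 free points. -/

import Mathlib

/-- Hamming weight of a binary word: the number of ones. -/
def wt {n : ℕ} (a : Fin n → Bool) : ℕ :=
  (Finset.univ.filter (fun i => a i = true)).card

/-- N(a,b) = number of positions where a is 0 and b is 1. -/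
def NN {n : ℕ} (a b : Fin n → Bool) : ℕ :=
  (Finset.univ.filter (fun i => a i = false ∧ b i = true)).card

/-- The Z-distance d_Z(a,b) = max(N(a,b), N(b,a)). -/
def dZ {n : ℕ} (a b : Fin n → Bool) : ℕ := max (NN a b) (NN b a)

/-- A code correcting one asymmetric error: d_Z(a,b) ≥ 2 for distinct codewords. -/
def IsZCode {n : ℕ} (C : Finset (Fin n → Bool)) : Prop :=
  ∀ a ∈ C, ∀ b ∈ C, a ≠ b → 2 ≤ dZ a b

/-- The output ball B_1(a): words obtainable from a by at most one asymmetric (1→0) error. -/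
def ball {n : ℕ} (a : Fin n → Bool) : Finset (Fin n → Bool) :=
  Finset.univ.filter (fun y => (∀ i, y i ≤ a i) ∧ wt a - wt y ≤ 1)

/-- The number of free points of a code: words lying in no ball B_1(a), a ∈ C. -/
def freeCount {n : ℕ} (C : Finset (Fin n → Bool)) : ℕ :=
  (Finset.univ.filter (fun y => ∀ a ∈ C, y ∉ ball a)).card

/-- A two-stage coding algorithm (c1, c2, dec) of lengths n1, n2 with message set `Fin M`
is successful if it correctly decodes under at most one asymmetric error in total. -/
def TwoStageSuccess (n1 n2 M : ℕ)
    (c1 : Fin M → (Fin n1 → Bool))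
    (c2 : Fin M → (Fin n1 → Bool) → (Fin n2 → Bool))
    (dec : (Fin n1 → Bool) → (Fin n2 → Bool) → Fin M) : Prop :=
  ∀ (m : Fin M) (y1 : Fin n1 → Bool) (y2 : Fin n2 → Bool),
    (∀ i, y1 i ≤ c1 m i) → (∀ i, y2 i ≤ c2 m y1 i) →
    (wt (c1 m) - wt y1) + (wt (c2 m y1) - wt y2) ≤ 1 →
    dec y1 y2 = m

open Finset

/-- The set-system form of the Z-distance condition. -/
def IsZFamily {n : ℕ} (F : Finset (Finset (Fin n))) : Prop :=
  ∀ A ∈ F, ∀ B ∈ F, A ≠ B → 2 ≤ max #(A \ B) #(B \ A)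

/-- The number of members of `F` of size `k` containing `u`. -/
def upDegree {n : ℕ} (F : Finset (Finset (Fin n))) (u : Finset (Fin n)) (k : ℕ) : ℕ :=
  #{A ∈ F | u ⊆ A ∧ #A = k}

theorem IsZFamily.upDegree_add_le_one {n : ℕ} {F : Finset (Finset (Fin n))} (hF : IsZFamily F)
    (u : Finset (Fin n)) (k l : ℕ) (hu : #u = k) (hl : l = k + 1) :
    upDegree F u k + upDegree F u l ≤ 1 := by
  subst hl
  unfold upDegree
  rw [← card_union_of_disjoint]
  · rw [card_le_one]
    intro A hA B hB
    by_contra hne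
    simp only [mem_union, mem_filter] at hA hB
    have hAF : A ∈ F ∧ u ⊆ A ∧ #A ≤ k + 1 := by grind
    have hBF : B ∈ F ∧ u ⊆ B ∧ #B ≤ k + 1 := by grind
    have h := hF A hAF.1 B hBF.1 hne
    have h1 : #(A \ B) ≤ #(A \ u) := card_le_card (sdiff_subset_sdiff subset_rfl hBF.2.1)
    have h2 : #(B \ A) ≤ #(B \ u) := card_le_card (sdiff_subset_sdiff subset_rfl hAF.2.1)
    rw [card_sdiff_of_subset hAF.2.1] at h1
    rw [card_sdiff_of_subset hBF.2.1] at h2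
    omega
  · rw [disjoint_filter]
    intro A _ h1 h2
    omega

theorem sum_upDegree_insert {n : ℕ} (F : Finset (Finset (Fin n))) {u : Finset (Fin n)} {j k : ℕ}
    (hu : #u = j) : ∑ x ∈ uᶜ, upDegree F (insert x u) k = (k - j) * upDegree F u k := by
  have h : ∀ x ∈ uᶜ, upDegree F (insert x u) k =
      #(bipartiteAbove (fun x A => x ∈ A) {A ∈ F | u ⊆ A ∧ #A = k} x) := by
    intro x _
    unfold upDegree bipartiteAbove
    congr 1
    ext A
    simp only [mem_filter, insert_subset_iff]
    tauto
  rw [sum_congr rfl h, sum_card_bipartiteAbove_eq_sum_card_bipartiteBelow, mul_comm]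
  unfold upDegree
  rw [← smul_eq_mul, ← sum_const]
  refine sum_congr rfl fun A hA => ?_
  obtain ⟨-, huA, hA⟩ := mem_filter.1 hA
  rw [← hA, ← hu, ← card_sdiff_of_subset huA]
  congr 1
  ext x
  simp [bipartiteBelow, and_comm]

/-- A bound on a combination of two degrees, valid for all one-point extensions of `u`,
sums to a bound at `u`. -/
theorem upDegree_le_of_insert {n : ℕ} {F : Finset (Finset (Fin n))} {u : Finset (Fin n)}
    {j k l a b c : ℕ} (hu : #u = j)
    (h : ∀ v : Finset (Fin n), #v = j + 1 → a * upDegree F v k + b * upDegree F v l ≤ c) :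
    a * ((k - j) * upDegree F u k) + b * ((l - j) * upDegree F u l) ≤ (n - j) * c := by
  rw [← sum_upDegree_insert F hu, ← sum_upDegree_insert F hu, mul_sum, mul_sum,
    ← sum_add_distrib]
  calc _ ≤ ∑ _x ∈ uᶜ, c := sum_le_sum fun x hx => h _ (by
          rw [card_insert_of_notMem (mem_compl.1 hx), hu])
    _ = (n - j) * c := by simp [card_compl, hu]

theorem upDegree_empty {n : ℕ} (F : Finset (Finset (Fin n))) (k : ℕ) :
    upDegree F ∅ k = #{A ∈ F | #A = k} := by
  simp [upDegree]

theorem IsZFamily.lower_layers_le {F : Finset (Finset (Fin 8))} (hF : IsZFamily F) :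
    #{A ∈ F | #A = 0} + #{A ∈ F | #A = 1} ≤ 1 ∧ #{A ∈ F | #A = 1} + 2 * #{A ∈ F | #A = 2} ≤ 8 ∧
      #{A ∈ F | #A = 3} ≤ 8 ∧ #{A ∈ F | #A = 3} + 2 * #{A ∈ F | #A = 4} ≤ 28 := by
  simp only [← upDegree_empty]
  have h01 := hF.upDegree_add_le_one ∅ 0 1 rfl rfl
  have h12 := upDegree_le_of_insert (F := F) (u := ∅) (j := 0) (k := 1) (l := 2) (a := 1) (b := 1)
    (c := 1) rfl fun v hv => by have := hF.upDegree_add_le_one v 1 2 hv rfl; omega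
  have hpair : ∀ v : Finset (Fin 8), #v = 2 →
      upDegree F v 3 ≤ 1 ∧ upDegree F v 3 + upDegree F v 4 ≤ 3 := by
    intro v hv
    have h1 := hF.upDegree_add_le_one v 2 3 hv rfl
    have h2 := upDegree_le_of_insert (F := F) (k := 3) (l := 4) (a := 1) (b := 1)
      (c := 1) hv fun w hw => by have := hF.upDegree_add_le_one w 3 4 hw rfl; omega
    omega
  have hpoint : ∀ v : Finset (Fin 8), #v = 1 →
      upDegree F v 3 ≤ 3 ∧ 2 * upDegree F v 3 + 3 * upDegree F v 4 ≤ 21 := by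
    intro v hv
    have h1 := upDegree_le_of_insert (F := F) (k := 3) (l := 4) (a := 1) (b := 0)
      (c := 1) hv fun w hw => by have := hpair w hw; omega
    have h2 := upDegree_le_of_insert (F := F) (k := 3) (l := 4) (a := 1) (b := 1)
      (c := 3) hv fun w hw => by have := hpair w hw; omega
    omega
  have h3 := upDegree_le_of_insert (F := F) (u := ∅) (j := 0) (k := 3) (l := 4) (a := 1) (b := 0)
    (c := 3) rfl fun v hv => by have := hpoint v hv; omega
  have h34 := upDegree_le_of_insert (F := F) (u := ∅) (j := 0) (k := 3) (l := 4) (a := 2) (b := 3)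
    (c := 21) rfl fun v hv => by have := hpoint v hv; omega
  omega

theorem IsZFamily.compl {n : ℕ} {F : Finset (Finset (Fin n))} (hF : IsZFamily F) :
    IsZFamily (F.image compl) := by
  intro A hA B hB hne
  obtain ⟨A', hA', rfl⟩ := mem_image.1 hA
  obtain ⟨B', hB', rfl⟩ := mem_image.1 hB
  rw [compl_sdiff_compl, compl_sdiff_compl, max_comm]
  exact hF A' hA' B' hB' fun h => hne (h ▸ rfl)

theorem card_filter_image_compl {n : ℕ} (F : Finset (Finset (Fin n))) {k l : ℕ} (h : k + l = n) :
    #{A ∈ F.image compl | #A = k} = #{A ∈ F | #A = l} := by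
  rw [filter_image, card_image_of_injective _ compl_injective]
  congr 1
  refine filter_congr fun A _ => ?_
  have := card_le_univ A
  rw [card_compl]
  simp only [Fintype.card_fin] at *
  omega

theorem IsZFamily.le_sum_card {F : Finset (Finset (Fin 8))} (hF : IsZFamily F) (hc : #F = 36) :
    144 ≤ ∑ A ∈ F, #A := by
  have hmaps : ∀ A ∈ F, #A ∈ range 9 := fun A _ => by
    have := card_le_univ A
    simp only [Fintype.card_fin] at this
    simp only [mem_range]; omega
  have hcard := card_eq_sum_card_fiberwise hmaps
  have hsum : ∑ A ∈ F, #A = ∑ k ∈ range 9, k * #{A ∈ F | #A = k} := by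
    rw [← sum_fiberwise_of_maps_to hmaps]
    refine sum_congr rfl fun k _ => ?_
    rw [sum_congr rfl fun A hA => (mem_filter.1 hA).2, sum_const, smul_eq_mul, mul_comm]
  have hlow := hF.lower_layers_le
  have hupp := hF.compl.lower_layers_le
  rw [card_filter_image_compl F (show 0 + 8 = 8 from rfl),
    card_filter_image_compl F (show 1 + 7 = 8 from rfl),
    card_filter_image_compl F (show 2 + 6 = 8 from rfl),
    card_filter_image_compl F (show 3 + 5 = 8 from rfl),
    card_filter_image_compl F (show 4 + 4 = 8 from rfl)] at hupp
  simp only [sum_range_succ, sum_range_zero] at hcard hsum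
  omega

/-- The set of positions where a word is one. -/
def onesSet {n : ℕ} (a : Fin n → Bool) : Finset (Fin n) := {i | a i = true}

theorem mem_onesSet {n : ℕ} {a : Fin n → Bool} {i : Fin n} : i ∈ onesSet a ↔ a i = true := by
  simp [onesSet]

theorem onesSet_injective {n : ℕ} : Function.Injective (onesSet (n := n)) := by
  intro a b h
  funext i
  rw [Bool.eq_iff_iff, ← mem_onesSet, h, mem_onesSet]

theorem card_onesSet {n : ℕ} (a : Fin n → Bool) : #(onesSet a) = wt a := rfl

theorem NN_eq_card_sdiff {n : ℕ} (a b : Fin n → Bool) : NN a b = #(onesSet b \ onesSet a) := by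
  unfold NN
  congr 1
  ext i
  simp [mem_onesSet, and_comm]

theorem IsZCode.isZFamily {n : ℕ} {C : Finset (Fin n → Bool)} (hC : IsZCode C) :
    IsZFamily (C.image onesSet) := by
  intro A hA B hB hne
  obtain ⟨a, ha, rfl⟩ := mem_image.1 hA
  obtain ⟨b, hb, rfl⟩ := mem_image.1 hB
  rw [← NN_eq_card_sdiff, ← NN_eq_card_sdiff, max_comm]
  exact hC a ha b hb fun h => hne (h ▸ rfl)

theorem mem_ball_iff {n : ℕ} {a y : Fin n → Bool} :
    y ∈ ball a ↔ onesSet y ⊆ onesSet a ∧ #(onesSet a \ onesSet y) ≤ 1 := by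
  have hle : (∀ i, y i ≤ a i) ↔ onesSet y ⊆ onesSet a := by
    simp only [subset_iff, mem_onesSet, Bool.le_iff_imp]
  unfold ball
  rw [mem_filter, hle, ← card_onesSet, ← card_onesSet]
  simp only [mem_univ, true_and]
  exact and_congr_right fun h => by rw [card_sdiff_of_subset h]

theorem card_ball {n : ℕ} (a : Fin n → Bool) : #(ball a) = wt a + 1 := by
  have h : ball a =
      insert a ((onesSet a).image fun i => Function.update a i false) := by
    ext y
    rw [mem_ball_iff, mem_insert, mem_image]
    constructor
    · rintro ⟨hsub, hcard⟩
      rcases Nat.le_one_iff_eq_zero_or_eq_one.1 hcard with h0 | h1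
      · left
        rw [card_eq_zero, sdiff_eq_empty_iff_subset] at h0
        exact onesSet_injective (hsub.antisymm h0)
      · right
        obtain ⟨i, hi⟩ := card_eq_one.1 h1
        have hmem : ∀ j, j ∈ onesSet a \ onesSet y ↔ j = i := by simp [hi]
        refine ⟨i, (mem_sdiff.1 ((hmem i).2 rfl)).1, ?_⟩
        funext j
        have hj := hmem j
        have hs := @hsub j
        simp only [mem_sdiff, mem_onesSet] at hj hs
        by_cases hji : j = i
        · subst hji
          simp_all
        · rw [Function.update_of_ne hji]
          cases hy : y j <;> cases ha : a j <;> simp_all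
    · rintro (rfl | ⟨i, hi, rfl⟩)
      · simp
      · constructor
        · intro j
          by_cases hji : j = i <;> simp [mem_onesSet, hji]
        · refine (card_le_card (t := {i}) fun j hj => ?_).trans (card_singleton i).le
          by_contra hji
          rw [mem_singleton] at hji
          simp [mem_onesSet, hji] at hj
  rw [h, card_insert_of_notMem, card_image_of_injOn, card_onesSet]
  · intro i hi j _ hij
    by_contra hne
    have := congrFun hij i
    simp only [Function.update_self, Function.update_of_ne hne] at this
    rw [mem_coe, mem_onesSet, ← this] at hi
    exact Bool.false_ne_true hi
  · rw [mem_image]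
    rintro ⟨i, hi, h⟩
    have := congrFun h i
    rw [mem_onesSet, ← this, Function.update_self] at hi
    exact Bool.false_ne_true hi

theorem IsZCode.pairwiseDisjoint_ball {n : ℕ} {C : Finset (Fin n → Bool)} (hC : IsZCode C) :
    (C : Set (Fin n → Bool)).PairwiseDisjoint ball := by
  intro a ha b hb hne
  rw [Function.onFun, disjoint_left]
  intro y hya hyb
  rw [mem_ball_iff] at hya hyb
  have h := hC a ha b hb hne
  have h1 : #(onesSet a \ onesSet b) ≤ #(onesSet a \ onesSet y) :=
    card_le_card (sdiff_subset_sdiff subset_rfl hyb.1)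
  have h2 : #(onesSet b \ onesSet a) ≤ #(onesSet b \ onesSet y) :=
    card_le_card (sdiff_subset_sdiff subset_rfl hya.1)
  rw [dZ, NN_eq_card_sdiff, NN_eq_card_sdiff] at h
  omega

theorem IsZCode.freeCount_add {n : ℕ} {C : Finset (Fin n → Bool)} (hC : IsZCode C) :
    freeCount C + (∑ a ∈ C, wt a + #C) = 2 ^ n := by
  have hunion : #(C.biUnion ball) = ∑ a ∈ C, wt a + #C := by
    rw [card_biUnion hC.pairwiseDisjoint_ball]
    simp [card_ball, sum_add_distrib]
  have hfree : freeCount C = #(C.biUnion ball)ᶜ := by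
    unfold freeCount
    congr 1
    ext y
    simp
  rw [hfree, ← hunion, add_comm, card_add_card_compl]
  simp

/-- The word of length `n` whose letters are the binary digits of `k`. -/
def binaryWord (n k : ℕ) : Fin n → Bool := fun i => k.testBit i

/-- An optimal code of length 8, given by the numbers its words represent in binary. -/
def optimalCode : Finset (Fin 8 → Bool) :=
  ([0, 3, 12, 48, 192, 21, 42, 70, 88, 97, 137, 146, 164, 15, 54, 57, 83, 108, 156, 163, 197,
    202, 240, 93, 103, 122, 155, 174, 181, 214, 233, 63, 207, 243, 252, 255].map
      (binaryWord 8)).toFinset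

theorem isZCode_optimalCode : IsZCode optimalCode := by
  unfold IsZCode
  decide +kernel

theorem card_optimalCode : #optimalCode = 36 := by
  decide +kernel

theorem sum_wt_optimalCode : ∑ a ∈ optimalCode, wt a = 144 := by
  decide +kernel

theorem card_filter_wt_optimalCode (i : ℕ) : #{a ∈ optimalCode | wt a = i} =
    [1, 0, 4, 8, 10, 8, 4, 0, 1].getD i 0 := by
  by_cases hi : i < 9
  · have h : ∀ i < 9, #{a ∈ optimalCode | wt a = i} =
        [1, 0, 4, 8, 10, 8, 4, 0, 1].getD i 0 := by
      decide +kernel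
    exact h i hi
  · rw [List.getD_eq_default _ _ (by simpa using hi), card_eq_zero, filter_eq_empty_iff]
    intro a _ h
    have := card_le_univ (onesSet a)
    rw [card_onesSet, Fintype.card_fin] at this
    omega

theorem F_optimal_code_length_8 :
    (∃ C : Finset (Fin 8 → Bool), IsZCode C ∧ C.card = 36 ∧ freeCount C = 76 ∧
      ∀ i, (C.filter (fun a => wt a = i)).card =
        [1, 0, 4, 8, 10, 8, 4, 0, 1].getD i 0) ∧
    (∀ C : Finset (Fin 8 → Bool), IsZCode C → C.card = 36 → freeCount C ≤ 76) := by
  refine ⟨⟨optimalCode, isZCode_optimalCode, card_optimalCode, ?_, card_filter_wt_optimalCode⟩,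
    fun C hC hcard => ?_⟩
  · have h := isZCode_optimalCode.freeCount_add
    rw [sum_wt_optimalCode, card_optimalCode] at h
    omega
  · have h := hC.freeCount_add
    have hs := hC.isZFamily.le_sum_card
      ((card_image_of_injective C onesSet_injective).trans hcard)
    rw [sum_image onesSet_injective.injOn] at hs
    simp only [card_onesSet] at hs
    omega
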